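/- Let q ≥ 2 be an integer, let T be a locally finite tree on a vertex set V that is regular of degree q+1, with graph distance d, and let z : ℤ → V be a geodesic line, i.e. d(z(m), z(n)) = |m − n| for all m, n ∈ ℤ. Then there exists a graph automorphism g of T translating the line by one step: g(z(k)) = z(k−1) for all k ∈ ℤ. -/

import Mathlib

/-!
A partial isomorphism between two trees `G` and `H` is recorded by its graph, a set `R` of pairs
that is connected in the tensor product of `G` and `H` and projects injectively to both factors.
Uniqueness of paths makes both projections induced embeddings, so that related vertices `v`, `w`
have equally many neighbours inside the respective projections of `R`. When `G` and `H` are regular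
of the same finite degree, `v` has a neighbour outside if and only if `w` has one, and pairing two
such neighbours enlarges `R`. A maximal `R`, given by Zorn's lemma, is therefore the graph of an
isomorphism. Thus two copies of a connected graph in `G` and `H` are matched by some isomorphism,
and the theorem is the case of the two copies `z k` and `z (k - 1)` of the line.
-/

open SimpleGraph

section

variable {V W X : Type*} {G : SimpleGraph V} {H : SimpleGraph W} {K : SimpleGraph X}

theorem surjective_of_neighborSet_subset_range [Nonempty X] (hG : G.Preconnected) {f : X → V}
    (hf : ∀ x, G.neighborSet (f x) ⊆ Set.range f) : Function.Surjective f := by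
  intro v
  by_contra hv
  obtain ⟨x⟩ := ‹Nonempty X›
  obtain ⟨walk⟩ := hG (f x) v
  obtain ⟨d, -, ⟨y, hy⟩, hd⟩ := walk.exists_boundary_dart (Set.range f) ⟨x, rfl⟩ hv
  exact hd (hf y (hy ▸ d.adj))

theorem adj_of_copy_adj (hK : K.Preconnected) (hG : G.IsAcyclic) (f : Copy K G) {x y : X}
    (hxy : G.Adj (f x) (f y)) : K.Adj x y := by
  obtain ⟨p, hp⟩ := (hK x y).exists_isPath
  have := hG.subsingleton_path (f x) (f y)
  have image_path_eq_edge : (⟨p.map f.toHom, hp.map f.injective⟩ : G.Path (f x) (f y)) =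
      Path.singleton hxy := Subsingleton.elim _ _
  have length_eq_one := congrArg (fun q : G.Path (f x) (f y) => q.1.length) image_path_eq_edge
  exact Walk.adj_of_length_eq_one (by simpa [Path.singleton] using length_eq_one)

/-- A copy of a connected graph in an acyclic graph, regarded as an induced copy. -/
def inducedCopy (hK : K.Preconnected) (hG : G.IsAcyclic) (f : Copy K G) : K ↪g G where
  toFun := f
  inj' := f.injective
  map_rel_iff' := ⟨adj_of_copy_adj hK hG f, f.toHom.map_adj⟩

theorem neighborSet_subset_range_of_degree_le (f₁ : K ↪g G) (f₂ : Copy K H) {x : X}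
    [Fintype (G.neighborSet (f₁ x))] [Fintype (H.neighborSet (f₂ x))]
    (hdeg : H.degree (f₂ x) ≤ G.degree (f₁ x))
    (hf : G.neighborSet (f₁ x) ⊆ Set.range f₁) : H.neighborSet (f₂ x) ⊆ Set.range f₂ := by
  have image_eq : f₁ '' K.neighborSet x = G.neighborSet (f₁ x) := by
    ext v
    constructor
    · rintro ⟨y, hy, rfl⟩
      exact f₁.map_adj_iff.2 hy
    · intro hv
      obtain ⟨y, rfl⟩ := hf hv
      exact ⟨y, f₁.map_adj_iff.1 hv, rfl⟩
  have image_subset : f₂ '' K.neighborSet x ⊆ H.neighborSet (f₂ x) := by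
    rintro _ ⟨y, hy, rfl⟩
    exact f₂.toHom.map_adj hy
  have ncard_le : (H.neighborSet (f₂ x)).ncard ≤ (f₂ '' K.neighborSet x).ncard := by
    calc (H.neighborSet (f₂ x)).ncard = H.degree (f₂ x) := by
          rw [Set.ncard_eq_toFinset_card', degree, neighborFinset]
      _ ≤ G.degree (f₁ x) := hdeg
      _ = (f₁ '' K.neighborSet x).ncard := by
          rw [image_eq, Set.ncard_eq_toFinset_card', degree, neighborFinset]
      _ = (K.neighborSet x).ncard := Set.ncard_image_of_injective _ f₁.injective
      _ = (f₂ '' K.neighborSet x).ncard := (Set.ncard_image_of_injective _ f₂.injective).symm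
  rw [← Set.eq_of_subset_of_ncard_le image_subset ncard_le]
  exact Set.image_subset_range _ _

/-- The tensor (categorical) product of two graphs: pairs are adjacent when both of their
components are. -/
def tensorProd (G : SimpleGraph V) (H : SimpleGraph W) : SimpleGraph (V × W) :=
  G.comap Prod.fst ⊓ H.comap Prod.snd

/-- `R` is the graph of an injective partial map from `V` to `W` whose domain can be connected
through edges of `G` that the map sends to edges of `H`. Between acyclic graphs this makes it an
isomorphism of connected induced subgraphs. -/
structure IsPartialIso (G : SimpleGraph V) (H : SimpleGraph W) (R : Set (V × W)) : Prop where
  connected : ((tensorProd G H).induce R).Connected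
  injOn_fst : R.InjOn Prod.fst
  injOn_snd : R.InjOn Prod.snd

namespace IsPartialIso

variable {R : Set (V × W)}

/-- The projection of a partial isomorphism to its domain. -/
def fst (hR : IsPartialIso G H R) (hG : G.IsAcyclic) : (tensorProd G H).induce R ↪g G :=
  inducedCopy hR.connected.preconnected hG
    (Hom.toCopy ⟨fun x => x.1.1, fun h => h.1⟩ hR.injOn_fst.injective)

/-- The projection of a partial isomorphism to its range. -/
def snd (hR : IsPartialIso G H R) (hH : H.IsAcyclic) : (tensorProd G H).induce R ↪g H :=
  inducedCopy hR.connected.preconnected hH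
    (Hom.toCopy ⟨fun x => x.1.2, fun h => h.2⟩ hR.injOn_snd.injective)

theorem range_copies (hK : K.Connected) (f₁ : Copy K G) (f₂ : Copy K H) :
    IsPartialIso G H (Set.range fun x => (f₁ x, f₂ x)) where
  connected := by
    let toRange : K →g (tensorProd G H).induce (Set.range fun x => (f₁ x, f₂ x)) :=
      ⟨Set.rangeFactorization _, fun h => ⟨f₁.toHom.map_adj h, f₂.toHom.map_adj h⟩⟩
    exact hK.map toRange Set.rangeFactorization_surjective
  injOn_fst := by
    rintro _ ⟨x, rfl⟩ _ ⟨y, rfl⟩ hxy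
    rw [f₁.injective hxy]
  injOn_snd := by
    rintro _ ⟨x, rfl⟩ _ ⟨y, rfl⟩ hxy
    rw [f₂.injective hxy]

theorem sUnion {c : Set (Set (V × W))} (hc : IsChain (· ⊆ ·) c) (hne : c.Nonempty)
    (h : ∀ R ∈ c, IsPartialIso G H R) : IsPartialIso G H (⋃₀ c) where
  connected := by
    refine induce_sUnion_connected_of_pairwise_not_disjoint hne (fun {R S} hR hS => ?_)
      fun {R} hR => (h R hR).connected
    have hR' := Set.nonempty_coe_sort.1 (h R hR).connected.nonempty
    have hS' := Set.nonempty_coe_sort.1 (h S hS).connected.nonempty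
    rcases hc.total hR hS with hRS | hSR
    · rwa [Set.inter_eq_left.2 hRS]
    · rwa [Set.inter_eq_right.2 hSR]
  injOn_fst := Set.injOn_iff_pairwise_ne.2 <|
    hc.pairwise_sUnion.2 fun R hR => (h R hR).injOn_fst.pairwise_ne
  injOn_snd := Set.injOn_iff_pairwise_ne.2 <|
    hc.pairwise_sUnion.2 fun R hR => (h R hR).injOn_snd.pairwise_ne

theorem insert (hR : IsPartialIso G H R) {x : V × W} (hx : x ∈ R) {v : V} {w : W}
    (hxv : G.Adj x.1 v) (hxw : H.Adj x.2 w) (hv : v ∉ Prod.fst '' R) (hw : w ∉ Prod.snd '' R) :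
    IsPartialIso G H (insert (v, w) R) where
  connected := by
    rw [Set.insert_eq, Set.union_comm]
    exact connected_induce_union hR.connected.preconnected (by simp) hx rfl ⟨hxv, hxw⟩
  injOn_fst := (Set.injOn_insert fun h => hv ⟨_, h, rfl⟩).2 ⟨hR.injOn_fst, hv⟩
  injOn_snd := (Set.injOn_insert fun h => hv ⟨_, h, rfl⟩).2 ⟨hR.injOn_snd, hw⟩

theorem exists_maximal_superset (hR : IsPartialIso G H R) :
    ∃ S, R ⊆ S ∧ Maximal (IsPartialIso G H) S :=
  zorn_subset_nonempty {S | IsPartialIso G H S}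
    (fun c hcS hc hne => ⟨⋃₀ c, sUnion hc hne hcS, fun _ => Set.subset_sUnion_of_mem⟩) R hR

theorem neighborSet_subset_or_of_maximal (hR : Maximal (IsPartialIso G H) R) {x : V × W}
    (hx : x ∈ R) : G.neighborSet x.1 ⊆ Prod.fst '' R ∨ H.neighborSet x.2 ⊆ Prod.snd '' R := by
  by_contra! hcon
  obtain ⟨v, hxv, hv⟩ := Set.not_subset.1 hcon.1
  obtain ⟨w, hxw, hw⟩ := Set.not_subset.1 hcon.2
  have insert_subset := hR.le_of_ge (hR.prop.insert hx hxv hxw hv hw) (Set.subset_insert _ _)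
  exact hv ⟨(v, w), insert_subset (Set.mem_insert _ _), rfl⟩

theorem surjective_fst_snd_of_maximal [G.LocallyFinite] [H.LocallyFinite]
    (hR : Maximal (IsPartialIso G H) R) (hG : G.IsTree) (hH : H.IsTree)
    (hdeg : ∀ v w, G.degree v = H.degree w) :
    Function.Surjective (hR.prop.fst hG.isAcyclic) ∧
      Function.Surjective (hR.prop.snd hH.isAcyclic) := by
  set π₁ := hR.prop.fst hG.isAcyclic
  set π₂ := hR.prop.snd hH.isAcyclic
  have := hR.prop.connected.nonempty
  have closed : ∀ x, G.neighborSet (π₁ x) ⊆ Set.range π₁ ∧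
      H.neighborSet (π₂ x) ⊆ Set.range π₂ := by
    intro x
    have closed_or : G.neighborSet (π₁ x) ⊆ Set.range π₁ ∨
        H.neighborSet (π₂ x) ⊆ Set.range π₂ := by
      have := neighborSet_subset_or_of_maximal hR x.2
      rwa [Set.image_eq_range, Set.image_eq_range] at this
    rcases closed_or with h₁ | h₂
    · exact ⟨h₁, neighborSet_subset_range_of_degree_le π₁ π₂.toCopy (hdeg _ _).ge h₁⟩
    · exact ⟨neighborSet_subset_range_of_degree_le π₂ π₁.toCopy (hdeg _ _).le h₂, h₂⟩
  exact ⟨surjective_of_neighborSet_subset_range hG.connected.preconnected fun x => (closed x).1,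
    surjective_of_neighborSet_subset_range hH.connected.preconnected fun x => (closed x).2⟩

end IsPartialIso

theorem exists_iso_extending_copies [G.LocallyFinite] [H.LocallyFinite] (hG : G.IsTree)
    (hH : H.IsTree) (hdeg : ∀ v w, G.degree v = H.degree w) (hK : K.Connected)
    (f₁ : Copy K G) (f₂ : Copy K H) : ∃ g : G ≃g H, ∀ x, g (f₁ x) = f₂ x := by
  obtain ⟨R, hR₀, hR⟩ := (IsPartialIso.range_copies hK f₁ f₂).exists_maximal_superset
  obtain ⟨hsurj₁, hsurj₂⟩ := IsPartialIso.surjective_fst_snd_of_maximal hR hG hH hdeg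
  let e₁ := RelIso.ofSurjective (hR.prop.fst hG.isAcyclic) hsurj₁
  let e₂ := RelIso.ofSurjective (hR.prop.snd hH.isAcyclic) hsurj₂
  refine ⟨e₁.symm.trans e₂, fun x => ?_⟩
  have preimage_eq : e₁.symm (f₁ x) = ⟨(f₁ x, f₂ x), hR₀ ⟨x, rfl⟩⟩ := e₁.symm_apply_eq.2 rfl
  exact congrArg e₂ preimage_eq

/-- The copy of the two-way infinite path, realised as the Hasse diagram of `ℤ`, traced by a
geodesic line. -/
def lineCopy (z : ℤ → V) (hz : ∀ m n : ℤ, (G.dist (z m) (z n) : ℤ) = |m - n|) :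
    Copy (hasse ℤ) G where
  toHom :=
    { toFun := z
      map_rel' := by
        intro m n hmn
        rw [hasse_adj, Order.covBy_iff_add_one_eq, Order.covBy_iff_add_one_eq] at hmn
        have hdist := hz m n
        rw [← dist_eq_one_iff_adj]
        rcases hmn with rfl | rfl <;> simpa using hdist }
  injective' := by
    intro m n (hmn : z m = z n)
    have hdist := hz m n
    rw [hmn, dist_self, Nat.cast_zero] at hdist
    exact sub_eq_zero.1 (abs_eq_zero.1 hdist.symm)

theorem stmt_17_general {d : ℕ} [G.LocallyFinite] [H.LocallyFinite] (hG : G.IsTree)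
    (hH : H.IsTree) (hGd : G.IsRegularOfDegree d) (hHd : H.IsRegularOfDegree d)
    (z : ℤ → V) (hz : ∀ m n : ℤ, (G.dist (z m) (z n) : ℤ) = |m - n|)
    (z' : ℤ → W) (hz' : ∀ m n : ℤ, (H.dist (z' m) (z' n) : ℤ) = |m - n|) :
    ∃ g : G ≃g H, ∀ k : ℤ, g (z k) = z' k :=
  exists_iso_extending_copies hG hH (fun v w => (hGd v).trans (hHd w).symm)
    ⟨hasse_preconnected_of_succ ℤ⟩ (lineCopy z hz) (lineCopy z' hz')

end

theorem stmt_17 (q : ℕ) (hq : 2 ≤ q)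
    {V : Type*} (T : SimpleGraph V) (htree : T.IsTree)
    [T.LocallyFinite] (hreg : T.IsRegularOfDegree (q + 1))
    (z : ℤ → V)
    (hgeo : ∀ m n : ℤ, (T.dist (z m) (z n) : ℤ) = |m - n|) :
    ∃ g : T ≃g T, ∀ k : ℤ, g (z k) = z (k - 1) :=
  stmt_17_general htree htree hreg hreg z hgeo (fun k => z (k - 1))
    fun m n => by simpa using hgeo (m - 1) (n - 1)
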